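/- There exists an equilateral triangle with all three vertices in ℤ³ and side length l > 0 if and only if l = √(2(m² - mn + n²)) for some integers m, n not both zero. -/

import Mathlib

/-!
Let `u`, `v` be two sides of the triangle issuing from a common vertex, so that
`u ⬝ u = v ⬝ v = 2 * k` and `u ⬝ v = k`. The vector `w = (∑ v) • u - (∑ u) • v` of their plane has
coordinate sum zero, hence `w ⬝ w` is twice the norm of an Eisenstein integer; on the other hand
`w ⬝ w = 2 * k * N(η)` with `η = ∑ u + (∑ v) ω`. So, unless `η = 0` and already `u` has coordinate
sum zero, `k` is a quotient of two norms, and unique factorization of Eisenstein integers turns it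
into a norm.
-/

section QuadraticAlgebra

variable {R : Type*} [CommRing R] {a b : R}

lemma exists_norm_eq_of_mul_norm_eq_norm [IsDomain (QuadraticAlgebra R a b)]
    [UniqueFactorizationMonoid (QuadraticAlgebra R a b)] {k : R} {η ζ : QuadraticAlgebra R a b}
    (hη : η ≠ 0) (h : k * η.norm = ζ.norm) : ∃ δ : QuadraticAlgebra R a b, δ.norm = k := by
  obtain ⟨η', ζ', γ, hcoprime, rfl, rfl⟩ :=
    UniqueFactorizationMonoid.exists_reduced_factors η hη ζ
  have norm_regular {z : QuadraticAlgebra R a b} (hz : z ≠ 0) : z.norm ∈ nonZeroDivisors R :=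
    QuadraticAlgebra.norm_mem_nonZeroDivisors_iff.2 (mem_nonZeroDivisors_of_ne_zero hz)
  have h' : k * η'.norm = ζ'.norm := by
    rw [← mul_cancel_left_mem_nonZeroDivisors (norm_regular (left_ne_zero_of_mul hη)),
      mul_left_comm, ← map_mul, ← map_mul, h]
  have hdvd : η' ∣ ζ' * star ζ' := by
    rw [← QuadraticAlgebra.algebraMap_norm_eq_mul_star, ← h', map_mul,
      QuadraticAlgebra.algebraMap_norm_eq_mul_star]
    exact (dvd_mul_right _ _).mul_left _
  obtain ⟨δ, hδ⟩ := hcoprime.dvd_of_dvd_mul_left hdvd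
  refine ⟨δ, (mul_cancel_left_mem_nonZeroDivisors
    (norm_regular (right_ne_zero_of_mul hη))).1 ?_⟩
  rw [← map_mul, ← hδ, QuadraticAlgebra.norm_star, ← h', mul_comm]

lemma norm_eq_sq_sub_mul_add_sq (z : QuadraticAlgebra R (-1) (-1)) :
    z.norm = z.re ^ 2 - z.re * z.im + z.im ^ 2 := by
  rw [QuadraticAlgebra.norm_def]
  ring

end QuadraticAlgebra

lemma abs_two_mul_bmod_le (x : ℤ) {n : ℕ} (hn : 0 < n) : |2 * x.bmod n| ≤ n := by
  have := Int.le_bmod (x := x) hn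
  have := Int.bmod_le (x := x) hn
  rw [abs_le]
  omega

/-- The ring `ℤ[ω]` of Eisenstein integers, `ω ^ 2 = -1 - ω`; the norm of `m + n * ω` is
`m ^ 2 - m * n + n ^ 2`. -/
abbrev EisensteinInt : Type := QuadraticAlgebra ℤ (-1) (-1)

namespace EisensteinInt

lemma four_mul_norm (z : EisensteinInt) :
    4 * z.norm = (2 * z.re - z.im) ^ 2 + 3 * z.im ^ 2 := by
  rw [norm_eq_sq_sub_mul_add_sq]; ring

lemma norm_nonneg (z : EisensteinInt) : 0 ≤ z.norm := by
  linarith [four_mul_norm z, sq_nonneg (2 * z.re - z.im), sq_nonneg z.im]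

lemma norm_pos {z : EisensteinInt} : 0 < z.norm ↔ z ≠ 0 := by
  refine ⟨fun h ↦ ?_, fun hz ↦ (norm_nonneg z).lt_of_ne' fun h0 ↦ hz ?_⟩
  · rintro rfl
    simp at h
  have h4 := four_mul_norm z
  have him : z.im = 0 := by nlinarith only [h0, h4, sq_nonneg (2 * z.re - z.im)]
  have hre : z.re = 0 := by
    rw [h0, him] at h4
    nlinarith only [h4]
  exact QuadraticAlgebra.ext hre him

lemma norm_lt_sq {z : EisensteinInt} {n : ℤ} (hn : 0 < n) (hre : |2 * z.re| ≤ n)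
    (him : |2 * z.im| ≤ n) : z.norm < n ^ 2 := by
  have hre' := sq_le_sq' (abs_le.1 hre).1 (abs_le.1 hre).2
  have him' := sq_le_sq' (abs_le.1 him).1 (abs_le.1 him).2
  rw [norm_eq_sq_sub_mul_add_sq]
  nlinarith [sq_nonneg (z.re + z.im), pow_pos hn 2]

/-- The exact quotient `x * star y / y.norm` with both coordinates rounded to a nearest integer. -/
instance : Div EisensteinInt where
  div x y := ⟨(x * star y).re.bdiv y.norm.natAbs, (x * star y).im.bdiv y.norm.natAbs⟩

lemma div_def (x y : EisensteinInt) :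
    x / y = ⟨(x * star y).re.bdiv y.norm.natAbs, (x * star y).im.bdiv y.norm.natAbs⟩ :=
  rfl

lemma div_zero (x : EisensteinInt) : x / 0 = 0 := by
  rw [div_def]
  ext <;> simp [Int.bdiv]

lemma sub_mul_div_mul_star (x y : EisensteinInt) :
    (x - y * (x / y)) * star y =
      ⟨(x * star y).re.bmod y.norm.natAbs, (x * star y).im.bmod y.norm.natAbs⟩ := by
  have hnorm : (y.norm.natAbs : ℤ) = y.norm := Int.natAbs_of_nonneg (norm_nonneg y)
  have : (x - y * (x / y)) * star y = x * star y - algebraMap ℤ EisensteinInt y.norm * (x / y) := by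
    rw [QuadraticAlgebra.algebraMap_norm_eq_mul_star]; ring
  rw [this]
  ext <;> simp [Int.bmod_eq_self_sub_mul_bdiv, hnorm, div_def]

lemma norm_sub_mul_div_lt (x : EisensteinInt) {y : EisensteinInt} (hy : y ≠ 0) :
    (x - y * (x / y)).norm < y.norm := by
  have hpos : 0 < y.norm := norm_pos.2 hy
  have hnorm : (y.norm.natAbs : ℤ) = y.norm := Int.natAbs_of_nonneg hpos.le
  have hnat : 0 < y.norm.natAbs := Int.natAbs_pos.2 hpos.ne'
  refine lt_of_mul_lt_mul_right ?_ hpos.le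
  calc (x - y * (x / y)).norm * y.norm
      = ((x - y * (x / y)) * star y).norm := by rw [map_mul, QuadraticAlgebra.norm_star]
    _ < y.norm ^ 2 := by
      rw [sub_mul_div_mul_star]
      refine norm_lt_sq hpos ?_ ?_ <;> exact (abs_two_mul_bmod_le _ hnat).trans_eq hnorm
    _ = y.norm * y.norm := sq _

instance : EuclideanDomain EisensteinInt where
  quotient := (· / ·)
  quotient_zero := div_zero
  remainder x y := x - y * (x / y)
  quotient_mul_add_remainder_eq _ _ := add_sub_cancel _ _
  r x y := x.norm.natAbs < y.norm.natAbs
  r_wellFounded := (measure fun x : EisensteinInt ↦ x.norm.natAbs).wf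
  remainder_lt x _ hy := Int.natAbs_lt_natAbs_of_nonneg_of_lt (norm_nonneg _)
    (norm_sub_mul_div_lt x hy)
  mul_left_not_lt x y hy := by
    rw [map_mul, Int.natAbs_mul]
    exact (Nat.le_mul_of_pos_right _ (Int.natAbs_pos.2 (norm_pos.2 hy).ne')).not_gt

end EisensteinInt

open Matrix

section DotProduct

variable {R : Type*} [CommRing R]

lemma dotProduct_self_of_sum_eq_zero {w : Fin 3 → R} (hw : ∑ i, w i = 0) :
    w ⬝ᵥ w = 2 * (⟨w 0, -w 1⟩ : QuadraticAlgebra R (-1) (-1)).norm := by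
  rw [Fin.sum_univ_three] at hw
  rw [vec3_dotProduct, eq_neg_of_add_eq_zero_right hw, norm_eq_sq_sub_mul_add_sq]
  ring

lemma dotProduct_self_smul_sub_smul {ι : Type*} [Fintype ι] {u v : ι → R} {k : R}
    (huu : u ⬝ᵥ u = 2 * k) (hvv : v ⬝ᵥ v = 2 * k) (huv : u ⬝ᵥ v = k) (s t : R) :
    (t • u - s • v) ⬝ᵥ (t • u - s • v) =
      2 * (k * (⟨s, t⟩ : QuadraticAlgebra R (-1) (-1)).norm) := by
  simp only [sub_dotProduct, dotProduct_sub, smul_dotProduct, dotProduct_smul, smul_eq_mul,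
    dotProduct_comm v u, huu, hvv, huv, norm_eq_sq_sub_mul_add_sq]
  ring

end DotProduct

lemma exists_norm_eq_of_dotProduct_eq {u v : Fin 3 → ℤ} {k : ℤ} (huu : u ⬝ᵥ u = 2 * k)
    (hvv : v ⬝ᵥ v = 2 * k) (huv : u ⬝ᵥ v = k) : ∃ z : EisensteinInt, z.norm = k := by
  by_cases hη : (⟨∑ i, u i, ∑ i, v i⟩ : EisensteinInt) = 0
  · have hu : ∑ i, u i = 0 := congrArg QuadraticAlgebra.re hη
    exact ⟨_, mul_left_cancel₀ two_ne_zero ((dotProduct_self_of_sum_eq_zero hu).symm.trans huu)⟩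
  · set w : Fin 3 → ℤ := (∑ i, v i) • u - (∑ i, u i) • v
    have hw : ∑ i, w i = 0 := by
      simp only [w, Pi.sub_apply, Pi.smul_apply, smul_eq_mul, Finset.sum_sub_distrib,
        ← Finset.mul_sum]
      ring
    refine exists_norm_eq_of_mul_norm_eq_norm (ζ := ⟨w 0, -w 1⟩) hη
      (mul_left_cancel₀ two_ne_zero ?_)
    exact (dotProduct_self_smul_sub_smul huu hvv huv _ _).symm.trans
      (dotProduct_self_of_sum_eq_zero hw)

/-- The squared Euclidean distance between two points of `ℤ³`. -/
def sqDist (A B : ℤ × ℤ × ℤ) : ℤ :=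
  (A.1 - B.1) ^ 2 + (A.2.1 - B.2.1) ^ 2 + (A.2.2 - B.2.2) ^ 2

lemma ne_of_sqDist_ne_zero {A B : ℤ × ℤ × ℤ} (h : sqDist A B ≠ 0) : A ≠ B := by
  rintro rfl
  simp [sqDist] at h

lemma exists_two_mul_norm_eq_of_sqDist_eq {A B C : ℤ × ℤ × ℤ} {s : ℤ} (hAB : sqDist A B = s)
    (hBC : sqDist B C = s) (hAC : sqDist A C = s) : ∃ z : EisensteinInt, 2 * z.norm = s := by
  obtain ⟨a₁, a₂, a₃⟩ := A
  obtain ⟨b₁, b₂, b₃⟩ := B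
  obtain ⟨c₁, c₂, c₃⟩ := C
  let u : Fin 3 → ℤ := ![a₁ - c₁, a₂ - c₂, a₃ - c₃]
  let v : Fin 3 → ℤ := ![b₁ - c₁, b₂ - c₂, b₃ - c₃]
  simp only [sqDist] at hAB hBC hAC
  have huu : u ⬝ᵥ u = s := by
    rw [vec3_dotProduct']
    linear_combination hAC
  have hvv : v ⬝ᵥ v = s := by
    rw [vec3_dotProduct']
    linear_combination hBC
  have huv : 2 * (u ⬝ᵥ v) = s := by
    rw [vec3_dotProduct']
    linear_combination hAC + hBC - hAB
  obtain ⟨z, hz⟩ := exists_norm_eq_of_dotProduct_eq (huu.trans huv.symm) (hvv.trans huv.symm) rfl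
  exact ⟨z, by rw [hz, huv]⟩

lemma exists_sqDist_eq_two_mul_norm (z : EisensteinInt) :
    ∃ A B C, sqDist A B = 2 * z.norm ∧ sqDist B C = 2 * z.norm ∧ sqDist A C = 2 * z.norm := by
  -- The plane of coordinate sum zero is identified with `ℤ[ω]` by `(x, y, _) ↦ x - y * ω`;
  -- the vertices correspond to `0`, `z` and `-ω * z`.
  refine ⟨(0, 0, 0), (z.re, -z.im, z.im - z.re), (z.im, z.re - z.im, -z.re), ?_, ?_, ?_⟩ <;>
  · rw [sqDist, norm_eq_sq_sub_mul_add_sq]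
    ring

lemma eq_sqrt_iff_two_mul_norm_eq_sq {l : ℝ} (hl : 0 < l) (m n : ℤ) :
    l = √(2 * ((m : ℝ) ^ 2 - m * n + n ^ 2)) ↔
      ((2 * (⟨m, n⟩ : EisensteinInt).norm : ℤ) : ℝ) = l ^ 2 := by
  rw [eq_comm, Real.sqrt_eq_iff_mul_self_eq_of_pos hl, norm_eq_sq_sub_mul_add_sq, sq l, eq_comm]
  push_cast
  rfl

/-- An equilateral triangle with vertices in `ℤ³` and side length `l > 0`
exists iff `l = √(2(m² - mn + n²))` for some integers `m, n` not both zero. -/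
theorem equilateral_side_characterization (l : ℝ) (hl : 0 < l) :
    (∃ A B C : ℤ × ℤ × ℤ, A ≠ B ∧ B ≠ C ∧ A ≠ C ∧
      (((A.1 - B.1) ^ 2 + (A.2.1 - B.2.1) ^ 2 + (A.2.2 - B.2.2) ^ 2 : ℤ) : ℝ) = l ^ 2 ∧
      (((B.1 - C.1) ^ 2 + (B.2.1 - C.2.1) ^ 2 + (B.2.2 - C.2.2) ^ 2 : ℤ) : ℝ) = l ^ 2 ∧
      (((A.1 - C.1) ^ 2 + (A.2.1 - C.2.1) ^ 2 + (A.2.2 - C.2.2) ^ 2 : ℤ) : ℝ) = l ^ 2) ↔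
    (∃ m n : ℤ, ¬(m = 0 ∧ n = 0) ∧
      l = Real.sqrt (2 * ((m : ℝ) ^ 2 - m * n + n ^ 2))) := by
  have ne_of_cast_eq {A B : ℤ × ℤ × ℤ} (h : (sqDist A B : ℝ) = l ^ 2) : A ≠ B :=
    ne_of_sqDist_ne_zero (Int.cast_ne_zero.1 (h.trans_ne (pow_pos hl 2).ne'))
  constructor
  · rintro ⟨A, B, C, -, -, -, hAB, hBC, hAC⟩
    obtain ⟨⟨m, n⟩, hmn⟩ := exists_two_mul_norm_eq_of_sqDist_eq (A := A) (B := B) (C := C) rfl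
      (Int.cast_injective (hBC.trans hAB.symm)) (Int.cast_injective (hAC.trans hAB.symm))
    have hlmn := (eq_sqrt_iff_two_mul_norm_eq_sq hl m n).2 (hmn ▸ hAB)
    refine ⟨m, n, ?_, hlmn⟩
    rintro ⟨rfl, rfl⟩
    simp [hl.ne'] at hlmn
  · rintro ⟨m, n, -, hlmn⟩
    have hl2 := (eq_sqrt_iff_two_mul_norm_eq_sq hl m n).1 hlmn
    obtain ⟨A, B, C, hAB, hBC, hAC⟩ := exists_sqDist_eq_two_mul_norm ⟨m, n⟩
    rw [← hAB] at hl2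
    have hBC' : (sqDist B C : ℝ) = l ^ 2 := by rw [hBC, ← hAB, hl2]
    have hAC' : (sqDist A C : ℝ) = l ^ 2 := by rw [hAC, ← hAB, hl2]
    exact ⟨A, B, C, ne_of_cast_eq hl2, ne_of_cast_eq hBC', ne_of_cast_eq hAC', hl2, hBC', hAC'⟩
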